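/- (Intermediate claim from the sufficiency proof of Theorem 2.) For every n ≥ 1, every layer i and all vertices v, w adjacent in layer i: if alive n i v w holds and alive (n−1) i w v holds (the reverse stub is alive one level lower), then w ∈ S_n. -/

import Mathlib

/-- The pruning operator: keep the vertices of `S` that have, in every layer `i`,
at least `k i` neighbors (in layer `i`) inside `S`. -/
def prune {V : Type*} {R : ℕ} (G : Fin R → SimpleGraph V) [∀ i, DecidableRel (G i).Adj]
    (k : Fin R → ℕ) (S : Set V) : Set V :=
  {v | v ∈ S ∧ ∀ i : Fin R, k i ≤ Nat.card {w : V // (G i).Adj v w ∧ w ∈ S}}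

/-- The pruning sequence: `S_0` is the set of all vertices, `S_{n+1} = P (S_n)`. -/
def pruneSeq {V : Type*} {R : ℕ} (G : Fin R → SimpleGraph V) [∀ i, DecidableRel (G i).Adj]
    (k : Fin R → ℕ) : ℕ → Set V
  | 0 => Set.univ
  | n + 1 => prune G k (pruneSeq G k n)

/-- Aliveness of the stub `(e_{[i]}, w)`, where `e_{[i]}` is the layer-`i` edge from `v` to `w`:
`alive 0 i v w` holds whenever `v, w` are adjacent in layer `i`, and `alive (n+1) i v w` holds
iff `v, w` are adjacent in layer `i` and for every layer `l`, the number of vertices `u`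
adjacent to `w` in layer `l` with `(l, u) ≠ (i, v)` such that `alive n l w u` holds is at
least `k l - 1` if `l = i` and at least `k l` otherwise. -/
def alive {V : Type*} {R : ℕ} (G : Fin R → SimpleGraph V) [∀ i, DecidableRel (G i).Adj]
    (k : Fin R → ℕ) : ℕ → Fin R → V → V → Prop
  | 0, i, v, w => (G i).Adj v w
  | n + 1, i, v, w => (G i).Adj v w ∧ ∀ l : Fin R,
      (if l = i then k l - 1 else k l) ≤
        Nat.card {u : V // (G l).Adj w u ∧ (l, u) ≠ (i, v) ∧ alive G k n l w u}

/-! The stub `alive (n + 1) i v w` counts the alive stubs leaving `w` other than the one back to `v`,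
and lowers the threshold of layer `i` by one. If that reverse stub is alive at level `n`, putting it
back restores the full threshold, so `alive (n + 1) i v w` becomes a condition on `w` alone: `w` has
at least `k l` alive stubs in every layer `l`. A vertex `w` with this property at level `n` survives
`n + 1` prunings, by induction on `n`: an alive stub from `w` to `u` comes with an alive reverse stub
from `u` to `w`, because `w` has the property, and so `u` has the property one level lower and
survives `n` prunings. -/

section AliveVertex

variable {V : Type*} {R : ℕ} {G : Fin R → SimpleGraph V} [∀ i, DecidableRel (G i).Adj]
  {k : Fin R → ℕ} {n : ℕ} {i : Fin R} {v w : V}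

variable (G k n i w) in
/-- The neighbors `u` of `w` in layer `i` whose stub, on the edge from `w` to `u`, is alive at
level `n`. The alive stubs of `w` are counted as the cardinality of this set. -/
def aliveNeighborSet : Set V :=
  {u | alive G k n i w u}

variable (G k n w) in
/-- Aliveness of a vertex: at level `n`, in every layer `l`, at least `k l` alive stubs leave `w`.
In contrast to `alive`, no edge into `w` is excluded from the count. -/
def AliveVertex : Prop :=
  ∀ l, k l ≤ (aliveNeighborSet G k n l w).ncard

theorem alive.adj (h : alive G k n i v w) : (G i).Adj v w := by
  cases n with
  | zero => exact h
  | succ n => exact h.1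

theorem aliveNeighborSet_subset_neighborSet :
    aliveNeighborSet G k n i w ⊆ (G i).neighborSet w :=
  fun _ hu => hu.adj

theorem alive_succ_iff :
    alive G k (n + 1) i v w ↔ (G i).Adj v w ∧
      k i ≤ (aliveNeighborSet G k n i w \ {v}).ncard + 1 ∧
      ∀ l ≠ i, k l ≤ (aliveNeighborSet G k n l w).ncard := by
  have same_layer : {u | (G i).Adj w u ∧ (i, u) ≠ (i, v) ∧ alive G k n i w u} =
      aliveNeighborSet G k n i w \ {v} := by
    ext u
    simpa [aliveNeighborSet, and_comm] using fun _ hu => hu.adj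
  have other_layer {l : Fin R} (hl : l ≠ i) :
      {u | (G l).Adj w u ∧ (l, u) ≠ (i, v) ∧ alive G k n l w u} = aliveNeighborSet G k n l w := by
    ext u
    simpa [aliveNeighborSet, hl] using alive.adj
  rw [← Nat.sub_le_iff_le_add, ← same_layer]
  refine and_congr_right fun _ => (and_forall_ne i).symm.trans (and_congr ?_ ?_)
  · rw [if_pos rfl]
    rfl
  · refine forall₂_congr fun l hl => ?_
    rw [if_neg hl, ← other_layer hl]
    rfl

variable [∀ i v, Finite ((G i).neighborSet v)]

theorem finite_aliveNeighborSet : (aliveNeighborSet G k n i w).Finite :=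
  (Set.toFinite _).subset aliveNeighborSet_subset_neighborSet

theorem alive.of_succ (h : alive G k (n + 1) i v w) : alive G k n i v w := by
  induction n generalizing i v w with
  | zero => exact h.adj
  | succ n ih =>
    have subset (l : Fin R) : aliveNeighborSet G k (n + 1) l w ⊆ aliveNeighborSet G k n l w :=
      fun _ => ih
    obtain ⟨hadj, hi, hl⟩ := alive_succ_iff.1 h
    refine alive_succ_iff.2 ⟨hadj, hi.trans ?_, fun l hne => (hl l hne).trans ?_⟩
    · gcongr
      exacts [finite_aliveNeighborSet.sdiff, subset i]
    · exact Set.ncard_le_ncard (subset l) finite_aliveNeighborSet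

theorem AliveVertex.of_succ (h : AliveVertex G k (n + 1) w) : AliveVertex G k n w :=
  fun l => (h l).trans (Set.ncard_le_ncard (fun _ => alive.of_succ) finite_aliveNeighborSet)

theorem alive_succ_iff_aliveVertex (h : alive G k n i w v) :
    alive G k (n + 1) i v w ↔ AliveVertex G k n w := by
  have hv : v ∈ aliveNeighborSet G k n i w := h
  rw [alive_succ_iff, and_iff_right h.adj.symm,
    Set.ncard_sdiff_singleton_add_one hv finite_aliveNeighborSet]
  exact and_forall_ne (p := fun l => k l ≤ (aliveNeighborSet G k n l w).ncard) i

theorem mem_prune_of_aliveVertex {S : Set V} (hw : w ∈ S) (h : AliveVertex G k n w)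
    (hS : ∀ l, aliveNeighborSet G k n l w ⊆ S) : w ∈ prune G k S :=
  ⟨hw, fun l => (h l).trans <|
    Set.ncard_le_ncard (Set.subset_inter aliveNeighborSet_subset_neighborSet (hS l))
      ((Set.toFinite ((G l).neighborSet w)).inter_of_left S)⟩

theorem AliveVertex.mem_pruneSeq_succ (h : AliveVertex G k n w) : w ∈ pruneSeq G k (n + 1) := by
  induction n generalizing w with
  | zero => exact mem_prune_of_aliveVertex (Set.mem_univ w) h fun l => Set.subset_univ _
  | succ n ih =>
    refine mem_prune_of_aliveVertex (ih h.of_succ) h fun l u hu => ih ?_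
    have reverse_alive : alive G k n l u w :=
      ((alive_succ_iff_aliveVertex (alive.of_succ hu)).2 h.of_succ).of_succ
    exact (alive_succ_iff_aliveVertex reverse_alive).1 hu

end AliveVertex

theorem mem_pruneSeq_of_alive_stub_general {V : Type*} {R : ℕ}
    (G : Fin R → SimpleGraph V) [∀ i, DecidableRel (G i).Adj]
    [∀ i v, Finite ((G i).neighborSet v)] (k : Fin R → ℕ) (n : ℕ) (i : Fin R) (v w : V)
    (h1 : alive G k (n + 1) i v w) (h2 : alive G k n i w v) :
    w ∈ pruneSeq G k (n + 1) :=
  ((alive_succ_iff_aliveVertex h2).1 h1).mem_pruneSeq_succ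

/-- Intermediate claim from the sufficiency proof of Theorem 2: for `n ≥ 1` and `v, w`
adjacent in layer `i`, if `alive n i v w` holds and the reverse stub is alive one level
lower (`alive (n-1) i w v`), then `w` survives the `n`-th pruning. -/
theorem mem_pruneSeq_of_alive_stub {V : Type*} [Fintype V] {R : ℕ}
    (G : Fin R → SimpleGraph V) [∀ i, DecidableRel (G i).Adj] (k : Fin R → ℕ)
    (n : ℕ) (hn : 1 ≤ n) (i : Fin R) (v w : V) (hadj : (G i).Adj v w)
    (h1 : alive G k n i v w) (h2 : alive G k (n - 1) i w v) :
    w ∈ pruneSeq G k n := by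
  obtain ⟨m, rfl⟩ := Nat.exists_eq_add_of_le' hn
  exact mem_pruneSeq_of_alive_stub_general G k m i v w h1 h2
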